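/- A ≠ H and B ≠ H hold if and only if the set {x ∈ Δ* : η(x) ∉ H} is strongly generic in Δ*; that is, A ≠ H and B ≠ H if and only if there exists ε > 0 such that for almost all n, the number of words x ∈ Δ^n with η(x) ∈ H is at most 2^{−εn}·|Δ|^n. -/

import Mathlib

open scoped ENNReal

/-- The alphabet `Δ = Σ ⊔ {b, b⁻¹}`: `Sum.inl s` for a letter `s ∈ Σ`, and
`Sum.inr true = b`, `Sum.inr false = b⁻¹`. -/
abbrev HNNAlph {H : Type*} (S : Finset H) := {x // x ∈ S} ⊕ Bool

/-- Evaluation of a single letter of `Δ` in the HNN extension. -/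
def hnnLetter {H : Type*} [Group H] {A B : Subgroup H} (φ : A ≃* B) {S : Finset H} :
    HNNAlph S → HNNExtension H A B φ
  | Sum.inl s => HNNExtension.of s.val
  | Sum.inr true => HNNExtension.t
  | Sum.inr false => HNNExtension.t⁻¹

/-- The evaluation homomorphism `η : Δ* → G` (on words, as lists of letters). -/
def hnnEval {H : Type*} [Group H] {A B : Subgroup H} (φ : A ≃* B) {S : Finset H}
    (w : List (HNNAlph S)) : HNNExtension H A B φ :=
  (w.map (hnnLetter φ)).prod

/-- The image of the base group `H` inside the HNN extension. -/
def hnnBase {H : Type*} [Group H] {A B : Subgroup H} (φ : A ≃* B) :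
    Subgroup (HNNExtension H A B φ) :=
  MonoidHom.range HNNExtension.of


open HNNExtension HNNExtension.NormalWord

section SpectralGap

variable {H : Type*} [Group H] {A B : Subgroup H} (φ : A ≃* B) {d : TransversalPair H A B}

theorem length_unitsSMul_of_cancels {u : ℤˣ} {w : NormalWord d} (h : Cancels u w) :
    (unitsSMul φ u w).toList.length + 1 = w.toList.length := by
  simp only [unitsSMul, h, dite_true]
  induction w using consRecOn with
  | ofGroup => simp [Cancels] at h
  | cons g u' w h1 h2 _ => simp [unitsSMulWithCancel]

theorem length_unitsSMul_of_not_cancels {u : ℤˣ} {w : NormalWord d} (h : ¬ Cancels u w) :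
    (unitsSMul φ u w).toList.length = w.toList.length + 1 := by
  simp [unitsSMul, h]

theorem eq_of_cancels_of_cancels_smul {u v : ℤˣ} {g : H} {w : NormalWord d} (h : Cancels u w)
    (h' : Cancels v (g • w)) : v = u := by
  have h1 := h.2
  have h2 := h'.2
  rw [group_smul_toList, h1] at h2
  simpa using h2.symm

open Classical in
/-- A weight on normal words decaying with the number of stable letters, with a bonus for words
in which some stable letter can cancel. -/
noncomputable def normalWordWeight (δ r : ℝ) (w : NormalWord d) : ℝ :=
  (if ∃ u, Cancels u w then 1 + δ else 1) * r ^ w.toList.length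

variable {δ r : ℝ}

theorem normalWordWeight_le (hδ : 0 ≤ δ) (hr : 0 ≤ r) (w : NormalWord d) :
    normalWordWeight δ r w ≤ (1 + δ) * r ^ w.toList.length := by
  unfold normalWordWeight
  gcongr
  split_ifs <;> linarith

theorem normalWordWeight_nonneg (hδ : 0 ≤ δ) (hr : 0 ≤ r) (w : NormalWord d) :
    0 ≤ normalWordWeight δ r w := by
  unfold normalWordWeight
  split_ifs <;> positivity

theorem normalWordWeight_unitsSMul_of_cancels (hδ : 0 ≤ δ) (hr : 0 < r) {u : ℤˣ}
    {w : NormalWord d} (h : Cancels u w) :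
    normalWordWeight δ r (unitsSMul φ u w) ≤ (1 + δ) * r⁻¹ * r ^ w.toList.length := by
  refine (normalWordWeight_le hδ hr.le _).trans_eq ?_
  rw [← length_unitsSMul_of_cancels φ h, pow_succ]
  field_simp

theorem normalWordWeight_unitsSMul_of_not_cancels (hδ : 0 ≤ δ) (hr : 0 < r) {u : ℤˣ}
    {w : NormalWord d} (h : ¬ Cancels u w) :
    normalWordWeight δ r (unitsSMul φ u w) ≤ (1 + δ) * r * r ^ w.toList.length := by
  refine (normalWordWeight_le hδ hr.le _).trans_eq ?_
  rw [length_unitsSMul_of_not_cancels φ h, pow_succ]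
  ring

theorem exists_mem_notMem_of_ne_top {S : Finset H} (hgen : Subgroup.closure (S : Set H) = ⊤)
    {C : Subgroup H} (hC : C ≠ ⊤) : ∃ s ∈ S, s ∉ C := by
  by_contra! h
  exact hC (top_le_iff.1 (hgen ▸ (Subgroup.closure_le C).2 h))

theorem sum_hnnLetter_smul {S : Finset H} (f : NormalWord d → ℝ) (w : NormalWord d) (u : ℤˣ) :
    ∑ x : HNNAlph S, f (hnnLetter φ x • w) =
      ∑ s : {x // x ∈ S}, f (s.val • w) +
        (f (unitsSMul φ u w) + f (unitsSMul φ (-u) w)) := by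
  have h1 : f ((t : HNNExtension H A B φ) • w) = f (unitsSMul φ 1 w) := by
    rw [t_smul_eq_unitsSMul]
  have h2 : f ((t⁻¹ : HNNExtension H A B φ) • w) = f (unitsSMul φ (-1) w) := by
    rw [← t_pow_smul_eq_unitsSMul]; simp
  simp only [Fintype.sum_sum_type, Fintype.sum_bool, hnnLetter, h1, h2, of_smul_eq_smul]
  rcases Int.units_eq_one_or u with rfl | rfl
  · rfl
  · rw [neg_neg, add_comm (f (unitsSMul φ 1 w))]

theorem sum_normalWordWeight_le {S : Finset H} (hgen : Subgroup.closure (S : Set H) = ⊤)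
    (hA : A ≠ ⊤) (hB : B ≠ ⊤) {K : ℝ} (hδ : 0 ≤ δ) (hr : 0 < r)
    (h1 : S.card * (1 + δ) + 2 * (1 + δ) * r ≤ K)
    (h2 : (S.card - 1) * (1 + δ) + 1 + (1 + δ) * (r + r⁻¹) ≤ K * (1 + δ)) (w : NormalWord d) :
    ∑ x : HNNAlph S, normalWordWeight δ r (hnnLetter φ x • w) ≤ K * normalWordWeight δ r w := by
  classical
  have hbase : ∀ s : {x // x ∈ S},
      normalWordWeight δ r (s.val • w) ≤ (1 + δ) * r ^ w.toList.length :=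
    fun s => normalWordWeight_le hδ hr.le _
  by_cases hw : ∃ u, Cancels u w
  · obtain ⟨u, hu⟩ := hw
    obtain ⟨s₀, hs₀, hs₀u⟩ : ∃ s ∈ S, s ∉ toSubgroup A B u := by
      apply exists_mem_notMem_of_ne_top hgen
      rcases Int.units_eq_one_or u with rfl | rfl
      · exact hA
      · exact hB
    have hs : normalWordWeight δ r (s₀ • w) = r ^ w.toList.length := by
      have : ¬ ∃ v, Cancels v (s₀ • w) := by
        rintro ⟨v, hv⟩
        obtain rfl := eq_of_cancels_of_cancels_smul hu hv
        exact hs₀u ((Subgroup.mul_mem_cancel_right _ hu.1).1 hv.1)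
      simp [normalWordWeight, this]
    have hnu : ¬ Cancels (-u) w := by
      intro h
      have := eq_of_cancels_of_cancels_smul (g := 1) hu (by rwa [one_smul])
      exact units_ne_neg_self u this.symm
    have hsum : ∑ s : {x // x ∈ S}, normalWordWeight δ r (s.val • w) ≤
        ((S.card - 1) * (1 + δ) + 1) * r ^ w.toList.length := by
      have hle := Finset.sum_le_card_nsmul (Finset.univ.erase (⟨s₀, hs₀⟩ : {x // x ∈ S})) _ _
        fun s _ => hbase s
      rw [← Finset.add_sum_erase _ _ (Finset.mem_univ (⟨s₀, hs₀⟩ : {x // x ∈ S})), hs]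
      rw [Finset.card_erase_of_mem (Finset.mem_univ _), Finset.card_univ, Fintype.card_coe,
        nsmul_eq_mul, Nat.cast_pred (Finset.card_pos.2 ⟨s₀, hs₀⟩)] at hle
      linarith
    rw [sum_hnnLetter_smul φ _ w u]
    have hc := normalWordWeight_unitsSMul_of_cancels φ hδ hr hu
    have hnc := normalWordWeight_unitsSMul_of_not_cancels φ hδ hr hnu
    have hwt : normalWordWeight δ r w = (1 + δ) * r ^ w.toList.length := by
      rw [normalWordWeight, if_pos ⟨u, hu⟩]
    rw [hwt]
    have := mul_le_mul_of_nonneg_right h2 (pow_nonneg hr.le w.toList.length)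
    linarith
  · rw [sum_hnnLetter_smul φ _ w 1]
    push Not at hw
    have hp := normalWordWeight_unitsSMul_of_not_cancels φ hδ hr (hw 1)
    have hn := normalWordWeight_unitsSMul_of_not_cancels φ hδ hr (hw (-1))
    have hwt : normalWordWeight δ r w = r ^ w.toList.length := by
      simp [normalWordWeight, hw]
    have hsum := Finset.sum_le_card_nsmul Finset.univ _ _ fun s _ => hbase s
    rw [Finset.card_univ, Fintype.card_coe, nsmul_eq_mul] at hsum
    rw [hwt]
    have := mul_le_mul_of_nonneg_right h1 (pow_nonneg hr.le w.toList.length)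
    linarith

theorem sum_normalWordWeight_eval_le {S : Finset H} {K : ℝ} (hK : 0 ≤ K)
    (h : ∀ w : NormalWord d, ∑ x : HNNAlph S, normalWordWeight δ r (hnnLetter φ x • w) ≤
      K * normalWordWeight δ r w) (n : ℕ) :
    ∑ x : Fin n → HNNAlph S,
      normalWordWeight δ r (hnnEval φ (List.ofFn x) • (NormalWord.empty : NormalWord d)) ≤
        K ^ n := by
  induction n with
  | zero => simp [hnnEval, normalWordWeight, Cancels]
  | succ n ih =>
    rw [← (Fin.consEquiv fun _ => HNNAlph S).sum_comp, Fintype.sum_prod_type, Finset.sum_comm,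
      pow_succ']
    calc _ ≤ ∑ x : Fin n → HNNAlph S, K *
          normalWordWeight δ r (hnnEval φ (List.ofFn x) • (NormalWord.empty : NormalWord d)) := by
          refine Finset.sum_le_sum fun x _ => ?_
          simpa [Fin.consEquiv, hnnEval, List.ofFn_succ, mul_smul] using
            h (hnnEval φ (List.ofFn x) • NormalWord.empty)
      _ ≤ _ := by
          rw [← Finset.mul_sum]
          gcongr

theorem card_mem_hnnBase_le {S : Finset H} {K : ℝ} (hδ : 0 ≤ δ) (hr : 0 ≤ r) (hK : 0 ≤ K)
    (h : ∀ w : NormalWord d, ∑ x : HNNAlph S, normalWordWeight δ r (hnnLetter φ x • w) ≤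
      K * normalWordWeight δ r w) (n : ℕ) :
    (Nat.card {w : Fin n → HNNAlph S // hnnEval φ (List.ofFn w) ∈ hnnBase φ} : ℝ) ≤ K ^ n := by
  classical
  refine le_trans ?_ (sum_normalWordWeight_eval_le φ hK h n)
  rw [Nat.card_eq_fintype_card, Fintype.card_subtype, Finset.card_filter]
  push_cast
  refine Finset.sum_le_sum fun x _ => ?_
  split_ifs with hx
  · obtain ⟨g, hg⟩ := hx
    rw [← hg, of_smul_eq_smul]
    simp [normalWordWeight, Cancels]
  · exact normalWordWeight_nonneg hδ hr _

theorem exists_contraction_constants {s : ℝ} (hs : 1 ≤ s) : ∃ δ r K : ℝ, 0 ≤ δ ∧ 0 < r ∧ 0 < K ∧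
    K < s + 2 ∧ s * (1 + δ) + 2 * (1 + δ) * r ≤ K ∧
    (s - 1) * (1 + δ) + 1 + (1 + δ) * (r + r⁻¹) ≤ K * (1 + δ) := by
  obtain ⟨q, hq, hq0, hq3⟩ : ∃ q : ℝ, q * (s + 2) = 1 ∧ 0 < q ∧ q ≤ 1 / 3 :=
    ⟨(s + 2)⁻¹, inv_mul_cancel₀ (by linarith), by positivity, by
      rw [inv_le_comm₀ (by linarith) (by norm_num)]; norm_num; linarith⟩
  have hrpos : 0 < 1 - q / 4 := by linarith
  refine ⟨q ^ 2 / 4, 1 - q / 4, s + 2 - q ^ 2 / 10, by positivity, hrpos,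
    by nlinarith, by nlinarith [sq_pos_of_pos hq0], ?_, ?_⟩
  · have : q ^ 2 * s = q - 2 * q ^ 2 := by linear_combination q * hq
    nlinarith [pow_pos hq0 3, pow_pos hq0 2]
  · have hinv : (1 - q / 4)⁻¹ ≤ 1 + q / 4 + q ^ 2 * (3 / 44) := by
      rw [inv_le_iff_one_le_mul₀ hrpos]
      nlinarith [pow_pos hq0 3, pow_pos hq0 2]
    have := mul_le_mul_of_nonneg_left hinv (by positivity : 0 ≤ 1 + q ^ 2 / 4)
    nlinarith [pow_pos hq0 2, pow_pos hq0 4, mul_le_mul_of_nonneg_left hq3 (pow_pos hq0 3).le,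
      mul_le_mul_of_nonneg_left hq3 (pow_pos hq0 2).le]

theorem exists_exponential_bound {S : Finset H} (hgen : Subgroup.closure (S : Set H) = ⊤)
    (hA : A ≠ ⊤) (hB : B ≠ ⊤) : ∃ ε > (0 : ℝ), ∀ n : ℕ,
      (Nat.card {w : Fin n → HNNAlph S // hnnEval φ (List.ofFn w) ∈ hnnBase φ} : ℝ)
          ≤ (2 : ℝ) ^ (-(ε * n)) * (S.card + 2 : ℝ) ^ n := by
  obtain ⟨d⟩ := TransversalPair.nonempty H A B
  obtain ⟨s, hs, -⟩ := exists_mem_notMem_of_ne_top hgen hA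
  have hcard : (1 : ℝ) ≤ S.card := by exact_mod_cast Finset.card_pos.2 ⟨s, hs⟩
  obtain ⟨δ, r, K, hδ, hr, hK, hKS, h1, h2⟩ := exists_contraction_constants hcard
  have hbound := card_mem_hnnBase_le (d := d) φ hδ hr.le hK.le
    (sum_normalWordWeight_le φ hgen hA hB hδ hr h1 h2)
  have hN : (0 : ℝ) < S.card + 2 := by positivity
  refine ⟨Real.logb 2 ((S.card + 2) / K), Real.logb_pos (by norm_num) ((one_lt_div hK).2 hKS),
    fun n => (hbound n).trans_eq ?_⟩
  rw [← neg_mul, Real.rpow_mul (by norm_num), Real.rpow_neg (by norm_num),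
    Real.rpow_logb (by norm_num) (by norm_num) (by positivity), Real.rpow_natCast, ← mul_pow]
  congr 1
  field_simp

end SpectralGap

section WordCounting

variable {α : Type*}

theorem exists_isMinOn_sum_take (f : α → ℤ) (l : List α) :
    ∃ i ≤ l.length, ∀ j, ((l.take i).map f).sum ≤ ((l.take j).map f).sum := by
  obtain ⟨i, hi, hmin⟩ := Finset.exists_min_image (Finset.range (l.length + 1))
    (fun i => ((l.take i).map f).sum) ⟨0, by simp⟩
  refine ⟨i, Nat.lt_succ_iff.1 (Finset.mem_range.1 hi), fun j => ?_⟩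
  rcases le_total j l.length with hj | hj
  · exact hmin j (Finset.mem_range.2 (Nat.lt_succ_iff.2 hj))
  · rw [List.take_of_length_le hj, ← List.take_length (l := l)]
    simpa using hmin l.length (by simp)

instance finite_length_eq_and [Finite α] (n : ℕ) (P : List α → Prop) :
    Finite {l : List α // l.length = n ∧ P l} :=
  ((List.finite_length_eq α n).subset fun _ h => h.1).to_subtype

theorem card_le_mul_card_of_exists_rotate [Finite α] {P Q : List α → Prop}
    (h : ∀ l, Q l → ∃ i ≤ l.length, P (l.rotate i)) (n : ℕ) :
    Nat.card {l : List α // l.length = n ∧ Q l} ≤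
      (n + 1) * Nat.card {l : List α // l.length = n ∧ P l} := by
  choose! i hi hP using h
  rw [← Nat.card_fin (n + 1), ← Nat.card_prod]
  refine Nat.card_le_card_of_injective
    (fun l => (⟨i l.1, by have := hi _ l.2.2; have := l.2.1; omega⟩,
      ⟨l.1.rotate (i l.1), by simpa using l.2.1, hP _ l.2.2⟩)) ?_
  intro l m hlm
  simp only [Prod.mk.injEq, Fin.mk.injEq, Subtype.mk.injEq] at hlm
  obtain ⟨h1, h2⟩ := hlm
  rw [h1] at h2
  exact Subtype.ext (List.rotate_injective _ h2)

theorem abs_sum_map_le {f : α → ℤ} (hf : ∀ a, |f a| ≤ 1) (l : List α) :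
    |(l.map f).sum| ≤ l.length := by
  induction l with
  | nil => simp
  | cons a l ih =>
    have := abs_add_le (f a) (l.map f).sum
    have := hf a
    simp only [List.map_cons, List.sum_cons, List.length_cons]
    push_cast
    linarith

theorem exists_card_pow_le_mul_card_sum_eq [Fintype α] {f : α → ℤ} (hf : ∀ a, |f a| ≤ 1) (n : ℕ) :
    ∃ k : ℤ, Fintype.card α ^ n ≤
      (2 * n + 1) * Nat.card {l : List α // l.length = n ∧ (l.map f).sum = k} := by
  classical
  obtain ⟨k, -, hk⟩ := Finset.exists_max_image (Finset.Icc (-n : ℤ) n)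
    (fun k => ({v : List.Vector α n | (v.toList.map f).sum = k} : Finset _).card)
    ⟨0, by simp⟩
  have hcard := Finset.card_le_mul_card_image_of_maps_to
    (s := (Finset.univ : Finset (List.Vector α n))) (f := fun v => (v.toList.map f).sum)
    (t := Finset.Icc (-n : ℤ) n)
    (fun v _ => by simpa [abs_le] using abs_sum_map_le hf v.toList) _ hk
  refine ⟨k, ?_⟩
  rw [Finset.card_univ, card_vector, Int.card_Icc, mul_comm] at hcard
  refine hcard.trans (Nat.mul_le_mul (by omega) ?_)
  rw [← Fintype.card_subtype, ← Nat.card_eq_fintype_card]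
  refine Nat.card_le_card_of_injective
    (fun v => ⟨v.1.toList, v.1.toList_length, v.2⟩) fun v w hvw => ?_
  simp only [Subtype.mk.injEq] at hvw
  exact Subtype.ext (List.Vector.toList_injective hvw)

theorem card_pow_le_mul_card_sum_eq_zero [Fintype α] {f : α → ℤ} (hf : ∀ a, |f a| ≤ 1)
    {e : α → α} (he : e.Injective) (hfe : ∀ a, f (e a) = -f a) (n : ℕ) :
    Fintype.card α ^ (2 * n) ≤
      (2 * n + 1) ^ 2 * Nat.card {l : List α // l.length = 2 * n ∧ (l.map f).sum = 0} := by
  obtain ⟨k, hk⟩ := exists_card_pow_le_mul_card_sum_eq hf n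
  have hneg : ∀ l : List α, ((l.map e).map f).sum = -(l.map f).sum := by
    intro l
    induction l with
    | nil => simp
    | cons a l ih =>
      simp only [List.map_cons, List.sum_cons, ih, hfe]
      ring
  have hpair : Nat.card {l : List α // l.length = n ∧ (l.map f).sum = k} ^ 2 ≤
      Nat.card {l : List α // l.length = 2 * n ∧ (l.map f).sum = 0} := by
    rw [sq, ← Nat.card_prod]
    refine Nat.card_le_card_of_injective (fun p => ⟨p.1.1 ++ p.2.1.map e, ?_, ?_⟩) ?_
    · simp [p.1.2.1, p.2.2.1, two_mul]
    · rw [List.map_append, List.sum_append, hneg, p.1.2.2, p.2.2.2, add_neg_cancel]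
    · rintro ⟨u, v⟩ ⟨u', v'⟩ h
      obtain ⟨h1, h2⟩ := List.append_inj (congrArg Subtype.val h) (u.2.1.trans u'.2.1.symm)
      exact Prod.ext (Subtype.ext h1) (Subtype.ext (List.map_injective_iff.2 he h2))
  calc Fintype.card α ^ (2 * n) = (Fintype.card α ^ n) ^ 2 := by rw [mul_comm, pow_mul]
    _ ≤ _ := Nat.pow_le_pow_left hk 2
    _ ≤ _ := by
      rw [mul_pow]
      exact Nat.mul_le_mul_left _ hpair

theorem card_length_eq_and_le [Finite α] (n : ℕ) (P : List α → Prop) :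
    Nat.card {l : List α // l.length = n ∧ P l} ≤
      Nat.card {w : Fin n → α // P (List.ofFn w)} := by
  refine Nat.card_le_card_of_injective
    (fun l => ⟨fun i => l.1.get (i.cast l.2.1.symm), ?_⟩) ?_
  · obtain ⟨l, rfl, hl⟩ := l
    simpa using hl
  · rintro ⟨l, rfl, hl⟩ ⟨m, hm, hm'⟩ h
    have := congrArg (fun w => List.ofFn w.1) h
    refine Subtype.ext (List.ext_get hm.symm fun i h1 h2 => ?_)
    exact congrFun (congrArg Subtype.val h) ⟨i, h1⟩

end WordCounting

section Ascending

variable {H : Type*} [Group H] {A B : Subgroup H} (φ : A ≃* B) {S : Finset H}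

/-- The exponent sum of `t ^ u` in a letter. -/
def letterHeight (u : ℤˣ) : HNNAlph S → ℤ
  | Sum.inl _ => 0
  | Sum.inr true => u
  | Sum.inr false => -u

theorem hnnLetter_eq_or_mem (u : ℤˣ) (x : HNNAlph S) :
    hnnLetter φ x = (t ^ (u : ℤ)) ^ letterHeight u x ∨
      letterHeight u x = 0 ∧ hnnLetter φ x ∈ hnnBase φ := by
  rcases x with s | _ | _
  · exact Or.inr ⟨rfl, s.1, rfl⟩
  all_goals
    left
    rcases Int.units_eq_one_or u with rfl | rfl <;> simp [hnnLetter, letterHeight]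

theorem conj_mem_hnnBase {u : ℤˣ} (hu : toSubgroup A B u = ⊤) {g : HNNExtension H A B φ}
    (hg : g ∈ hnnBase φ) : t ^ (u : ℤ) * g * (t ^ (u : ℤ))⁻¹ ∈ hnnBase φ := by
  obtain ⟨h, rfl⟩ := hg
  have hmem : h ∈ toSubgroup A B u := hu ▸ Subgroup.mem_top h
  rcases Int.units_eq_one_or u with rfl | rfl
  · exact ⟨φ ⟨h, hmem⟩, by simp [equiv_eq_conj]⟩
  · exact ⟨φ.symm ⟨h, hmem⟩, by simp [equiv_symm_eq_conj]⟩

theorem conj_zpow_mem_hnnBase {u : ℤˣ} (hu : toSubgroup A B u = ⊤) {g : HNNExtension H A B φ}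
    (hg : g ∈ hnnBase φ) {k : ℤ} (hk : 0 ≤ k) :
    (t ^ (u : ℤ)) ^ k * g * ((t ^ (u : ℤ)) ^ k)⁻¹ ∈ hnnBase φ := by
  lift k to ℕ using hk
  induction k with
  | zero => simpa using hg
  | succ k ih =>
    have := conj_mem_hnnBase φ hu ih
    rw [Nat.cast_succ, add_comm, zpow_add, zpow_one]
    simpa only [mul_inv_rev, mul_assoc] using this

theorem zpow_mul_hnnEval_mul_zpow_mem_hnnBase {u : ℤˣ} (hu : toSubgroup A B u = ⊤)
    (l : List (HNNAlph S)) {k : ℤ}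
    (hk : ∀ j, 0 ≤ k + ((l.take j).map (letterHeight u)).sum) :
    (t ^ (u : ℤ)) ^ k * hnnEval φ l *
      (t ^ (u : ℤ)) ^ (-(k + (l.map (letterHeight u)).sum)) ∈ hnnBase φ := by
  induction l generalizing k with
  | nil => simp [hnnEval]
  | cons x l ih =>
    have hcons : hnnEval φ (x :: l) = hnnLetter φ x * hnnEval φ l := by simp [hnnEval]
    have hih := ih (k := k + letterHeight u x) fun j => by
      simpa [add_assoc] using hk (j + 1)
    rw [hcons, List.map_cons, List.sum_cons, ← add_assoc]
    rcases hnnLetter_eq_or_mem φ u x with hx | ⟨h0, hx⟩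
    · rwa [hx, ← mul_assoc, ← zpow_add]
    · rw [h0, add_zero] at hih ⊢
      have := mul_mem (conj_zpow_mem_hnnBase φ hu hx (by simpa using hk 0)) hih
      simpa [mul_assoc] using this

theorem exists_rotate_hnnEval_mem_hnnBase {u : ℤˣ} (hu : toSubgroup A B u = ⊤)
    (l : List (HNNAlph S)) (hl : (l.map (letterHeight u)).sum = 0) :
    ∃ i ≤ l.length, hnnEval φ (l.rotate i) ∈ hnnBase φ := by
  obtain ⟨i, hi, hmin⟩ := exists_isMinOn_sum_take (letterHeight u) l
  refine ⟨i, hi, ?_⟩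
  have hsplit : ((l.take i).map (letterHeight u)).sum +
      ((l.drop i).map (letterHeight u)).sum = 0 := by
    rw [← List.sum_append, ← List.map_append, List.take_append_drop, hl]
  have htake := zpow_mul_hnnEval_mul_zpow_mem_hnnBase φ hu (l.take i)
    (k := -((l.take i).map (letterHeight u)).sum) fun j => by
      rw [List.take_take]
      linarith [hmin (min j i)]
  have hdrop := zpow_mul_hnnEval_mul_zpow_mem_hnnBase φ hu (l.drop i) (k := 0) fun j => by
    have := hmin (i + j)
    rw [List.take_add, List.map_append, List.sum_append] at this
    linarith
  have heval : hnnEval φ (l.rotate i) = hnnEval φ (l.drop i) * hnnEval φ (l.take i) := by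
    rw [List.rotate_eq_drop_append_take hi]
    simp [hnnEval]
  have hinv : -((l.drop i).map (letterHeight u)).sum = ((l.take i).map (letterHeight u)).sum := by
    linarith
  rw [zero_add, hinv, zpow_zero, one_mul] at hdrop
  rw [neg_add_cancel, neg_zero, zpow_zero, mul_one] at htake
  rw [heval]
  simpa [mul_assoc] using mul_mem hdrop htake

theorem card_pow_le_mul_card_mem_hnnBase {u : ℤˣ} (hu : toSubgroup A B u = ⊤) (n : ℕ) :
    (S.card + 2) ^ (2 * n) ≤ (2 * n + 1) ^ 3 *
      Nat.card {w : Fin (2 * n) → HNNAlph S // hnnEval φ (List.ofFn w) ∈ hnnBase φ} := by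
  have hcard : Fintype.card (HNNAlph S) = S.card + 2 := by simp
  have h1 := card_pow_le_mul_card_sum_eq_zero (f := letterHeight (S := S) u)
    (fun x => by
      rcases x with s | _ | _ <;> rcases Int.units_eq_one_or u with rfl | rfl <;>
        simp [letterHeight])
    (Equiv.sumCongr (Equiv.refl _) Equiv.boolNot).injective
    (fun x => by rcases x with s | _ | _ <;> simp [letterHeight]) n
  have h2 := card_le_mul_card_of_exists_rotate (P := fun l => hnnEval φ l ∈ hnnBase φ)
    (Q := fun l => (l.map (letterHeight u)).sum = 0) (exists_rotate_hnnEval_mem_hnnBase (S := S) φ hu)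
    (2 * n)
  rw [← hcard]
  calc _ ≤ _ := h1
    _ ≤ _ := Nat.mul_le_mul_left _ (h2.trans (Nat.mul_le_mul_left _ (card_length_eq_and_le _ _)))
    _ = _ := by ring

theorem not_exponential_bound {u : ℤˣ} (hu : toSubgroup A B u = ⊤) {ε : ℝ} (hε : 0 < ε) :
    ¬ ∀ᶠ n : ℕ in Filter.atTop,
      (Nat.card {w : Fin n → HNNAlph S // hnnEval φ (List.ofFn w) ∈ hnnBase φ} : ℝ)
        ≤ (2 : ℝ) ^ (-(ε * n)) * (S.card + 2 : ℝ) ^ n := by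
  intro h
  set q : ℝ := 2 ^ (-ε) with hq
  have hq0 : 0 < q := by positivity
  have hq1 : q < 1 := Real.rpow_lt_one_of_one_lt_of_neg one_lt_two (neg_lt_zero.2 hε)
  have hlim : Filter.Tendsto (fun n : ℕ => ((n : ℝ) + 1) ^ 3 * q ^ n) Filter.atTop (nhds 0) := by
    have := (tendsto_pow_const_mul_const_pow_of_abs_lt_one 3
      (by rwa [abs_of_pos hq0] : |q| < 1)).comp (Filter.tendsto_add_atTop_nat 1)
    have := this.mul_const q⁻¹
    rw [zero_mul] at this
    refine this.congr fun n => ?_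
    simp only [Function.comp_apply, pow_succ q]
    push_cast
    field_simp
  obtain ⟨n, hn, hn1⟩ := Filter.eventually_atTop.1 (h.and (hlim.eventually (gt_mem_nhds one_pos)))
    |>.imp fun N hN => hN (2 * N) (by omega)
  have hlow : ((S.card : ℝ) + 2) ^ (2 * n) ≤ ((2 * n : ℕ) + 1 : ℝ) ^ 3 *
      Nat.card {w : Fin (2 * n) → HNNAlph S // hnnEval φ (List.ofFn w) ∈ hnnBase φ} := by
    exact_mod_cast card_pow_le_mul_card_mem_hnnBase (S := S) φ hu n
  have hN : (0 : ℝ) < ((S.card : ℝ) + 2) ^ (2 * n) := by positivity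
  rw [← neg_mul, Real.rpow_mul zero_le_two, ← hq, Real.rpow_natCast] at hn
  have := hlow.trans (mul_le_mul_of_nonneg_left hn (by positivity))
  nlinarith

end Ascending

/-- `A ≠ H ≠ B` iff the complement of `H` is strongly generic in `Δ*`. -/
theorem stmt10 {H : Type*} [Group H] (S : Finset H)
    (hsym : ∀ x ∈ S, x⁻¹ ∈ S) (hgen : Subgroup.closure (S : Set H) = ⊤)
    (A B : Subgroup H) (φ : A ≃* B) :
    (A ≠ ⊤ ∧ B ≠ ⊤) ↔
      ∃ ε > (0 : ℝ), ∀ᶠ n : ℕ in Filter.atTop,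
        (Nat.card {w : Fin n → HNNAlph S // hnnEval φ (List.ofFn w) ∈ hnnBase φ} : ℝ)
          ≤ (2 : ℝ) ^ (-(ε * n)) * (S.card + 2 : ℝ) ^ n := by
  constructor
  · rintro ⟨hA, hB⟩
    obtain ⟨ε, hε, h⟩ := exists_exponential_bound φ hgen hA hB
    exact ⟨ε, hε, Filter.Eventually.of_forall h⟩
  · rintro ⟨ε, hε, h⟩
    exact ⟨fun hA => not_exponential_bound φ ((toSubgroup_one A B).trans hA) hε h,
      fun hB => not_exponential_bound φ ((toSubgroup_neg_one A B).trans hB) hε h⟩
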